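/- Let X be a complemented subspace of X_p. Suppose there exist positive constants c and δ such that for every ε > 0 there is ε' with 0 < ε' < ε such that for every N ∈ ℕ there exist x ∈ X with ‖x‖ = 1 and a finite set E ⊆ {N, N+1, …} satisfying (a) ‖x_{|[1,N]}‖ < N^{-1}, (b) |x_{|E}|_2 ≥ δ·|x|_2, and (c) ε ≥ c·|x_{|E}|_2 ≥ ω(E)^{(p-2)/(2p)} ≥ ε'. Then X contains a subspace which is isomorphic to X_p and is complemented in X_p. -/

import Mathlib

open scoped ENNReal

noncomputable section

/-- The sequence space `ℓ_p` (of real sequences), for a real exponent `p`. -/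
abbrev SeqP (p : ℝ) := lp (fun _ : ℕ => ℝ) (ENNReal.ofReal p)

/-- The sequence space `ℓ_2` (of real sequences). -/
abbrev Seq2 := lp (fun _ : ℕ => ℝ) 2

/-- The space `X_{p,w}`, realized as the submodule of `ℓ_p ⊕_∞ ℓ_2` consisting of the
pairs `(x, y)` with `y n = w n * x n`.  Since the norm on the product is the maximum of
the two norms, this is exactly the completion of the finitely supported sequences under
`‖a‖ = max {|a|_p, |a|_{2,w}}`, the element with coordinates `a` being identified with
the pair `(a, w·a)`. -/
def XpwMod (p : ℝ) (w : ℕ → ℝ) : Submodule ℝ (SeqP p × Seq2) where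
  carrier := {z | ∀ n, (z.2 : ℕ → ℝ) n = w n * (z.1 : ℕ → ℝ) n}
  add_mem' := by
    intro a b ha hb n
    simp only [Prod.fst_add, Prod.snd_add, lp.coeFn_add, Pi.add_apply, ha n, hb n]
    ring
  zero_mem' := by
    intro n
    simp
  smul_mem' := by
    intro c a ha n
    simp only [Prod.smul_fst, Prod.smul_snd, lp.coeFn_smul, Pi.smul_apply, ha n,
      smul_eq_mul]
    ring

/-- The space `X_{p,w}` with its natural norm `‖a‖ = max {|a|_p, |a|_{2,w}}`. -/
def Xpw (p : ℝ) (w : ℕ → ℝ) : Type := ↥(XpwMod p w)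

variable {p : ℝ} {w : ℕ → ℝ}

instance [Fact (1 ≤ ENNReal.ofReal p)] : NormedAddCommGroup (Xpw p w) :=
  inferInstanceAs (NormedAddCommGroup ↥(XpwMod p w))

instance [Fact (1 ≤ ENNReal.ofReal p)] : NormedSpace ℝ (Xpw p w) :=
  inferInstanceAs (NormedSpace ℝ ↥(XpwMod p w))

/-- The pair of coordinates (in `ℓ_p` and in weighted `ℓ_2`) of an element of `X_{p,w}`. -/
def Xpw.pair (x : Xpw p w) : SeqP p × Seq2 := (show ↥(XpwMod p w) from x).val

/-- The underlying sequence of coordinates of an element of `X_{p,w}`. -/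
def seq (x : Xpw p w) : ℕ → ℝ := (Xpw.pair x).1

/-- `|x|_p` for `x ∈ X_{p,w}`. -/
def nrmP (x : Xpw p w) : ℝ := ‖(Xpw.pair x).1‖

/-- `|x|_2 = |x|_{2,w}` for `x ∈ X_{p,w}`. -/
def nrm2 (x : Xpw p w) : ℝ := ‖(Xpw.pair x).2‖

/-- The ratio `r(x) = |x|_2 / |x|_p`. -/
def ratio (x : Xpw p w) : ℝ := nrm2 x / nrmP x

/-- `ω(E) = ∑_{n ∈ E} w_n^{2p/(p-2)}`. -/
def omegaE (p : ℝ) (w : ℕ → ℝ) (E : Set ℕ) : ℝ :=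
  ∑' n : E, w (n : ℕ) ^ (2 * p / (p - 2))

/-- The pairing `⟨x, y⟩ = ∑_n x_n y_n w_n²`. -/
def pairW (w : ℕ → ℝ) (x y : Xpw p w) : ℝ :=
  ∑' n, seq x n * seq y n * w n ^ 2

/-- `w` is a weight sequence suitable for Rosenthal's space `X_p`: it is positive and for
every `ε > 0`, `∑_{w_n < ε} w_n^{2p/(p-2)} = ∞`. -/
def IsXpWeight (p : ℝ) (w : ℕ → ℝ) : Prop :=
  (∀ n, 0 < w n) ∧
    ∀ ε : ℝ, 0 < ε →
      (∑' n : {n : ℕ | w n < ε}, ENNReal.ofReal (w (n : ℕ) ^ (2 * p / (p - 2)))) = ⊤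

theorem memℓp_indicator {q : ℝ≥0∞} (E : Set ℕ) {f : ℕ → ℝ} (hf : Memℓp f q) :
    Memℓp (E.indicator f) q := by
  rcases ENNReal.trichotomy q with hq | hq | hq
  · subst hq
    refine memℓp_zero ((memℓp_zero_iff.mp hf).subset ?_)
    intro i hi
    simp only [Set.mem_setOf_eq] at hi ⊢
    intro h
    exact hi (by simp [Set.indicator_apply, h])
  · subst hq
    obtain ⟨C, hC⟩ := (memℓp_infty_iff.mp hf)
    refine memℓp_infty ⟨C, ?_⟩
    rintro x ⟨i, rfl⟩
    exact le_trans (norm_indicator_le_norm_self f i) (hC ⟨i, rfl⟩)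
  · refine memℓp_gen (Summable.of_nonneg_of_le (fun i => ?_) (fun i => ?_)
      (hf.summable hq))
    · positivity
    · exact Real.rpow_le_rpow (norm_nonneg _) (norm_indicator_le_norm_self f i) hq.le

/-- The restriction `x ↦ x_{|E}` of elements of `X_{p,w}` to a set `E` of coordinates. -/
def restrict (E : Set ℕ) (x : Xpw p w) : Xpw p w :=
  show ↥(XpwMod p w) from
  ⟨(⟨E.indicator ((Xpw.pair x).1 : ℕ → ℝ), memℓp_indicator E (lp.memℓp (Xpw.pair x).1)⟩,
    ⟨E.indicator ((Xpw.pair x).2 : ℕ → ℝ), memℓp_indicator E (lp.memℓp (Xpw.pair x).2)⟩), by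
    intro n
    by_cases hn : n ∈ E
    · change E.indicator ((Xpw.pair x).2 : ℕ → ℝ) n = w n * E.indicator ((Xpw.pair x).1 : ℕ → ℝ) n
      rw [Set.indicator_of_mem hn, Set.indicator_of_mem hn]
      exact (show ↥(XpwMod p w) from x).2 n
    · change E.indicator ((Xpw.pair x).2 : ℕ → ℝ) n = w n * E.indicator ((Xpw.pair x).1 : ℕ → ℝ) n
      rw [Set.indicator_of_notMem hn, Set.indicator_of_notMem hn, mul_zero]⟩

namespace XpwAux

section basics
variable [Fact (1 ≤ ENNReal.ofReal p)]

theorem pair_snd (x : Xpw p w) (n : ℕ) :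
    ((Xpw.pair x).2 : ℕ → ℝ) n = w n * seq x n :=
  (show ↥(XpwMod p w) from x).2 n

theorem seq_add (x y : Xpw p w) (n : ℕ) : seq (x + y) n = seq x n + seq y n := rfl

theorem seq_sub (x y : Xpw p w) (n : ℕ) : seq (x - y) n = seq x n - seq y n := rfl

theorem seq_smul (r : ℝ) (x : Xpw p w) (n : ℕ) : seq (r • x) n = r * seq x n := rfl

theorem seq_zero (n : ℕ) : seq (0 : Xpw p w) n = 0 := rfl

theorem seq_ext {x y : Xpw p w} (h : ∀ n, seq x n = seq y n) : x = y := by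
  apply Subtype.ext
  apply Prod.ext
  · apply lp.ext
    funext n
    exact h n
  · apply lp.ext
    funext n
    have hx := pair_snd x n
    have hy := pair_snd y n
    rw [h n] at hx
    exact hx.trans hy.symm

theorem norm_eq (x : Xpw p w) : ‖x‖ = max (nrmP x) (nrm2 x) := rfl

theorem nrmP_le_norm (x : Xpw p w) : nrmP x ≤ ‖x‖ := le_max_left _ _

theorem nrm2_le_norm (x : Xpw p w) : nrm2 x ≤ ‖x‖ := le_max_right _ _

theorem nrmP_nonneg (x : Xpw p w) : 0 ≤ nrmP x := norm_nonneg _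

theorem nrm2_nonneg (x : Xpw p w) : 0 ≤ nrm2 x := norm_nonneg _

theorem toReal_p (hp : 2 < p) : (ENNReal.ofReal p).toReal = p :=
  ENNReal.toReal_ofReal (by linarith)

theorem sumP_le (hp : 2 < p) (x : Xpw p w) (s : Finset ℕ) :
    ∑ k ∈ s, |seq x k| ^ p ≤ nrmP x ^ p := by
  have := lp.sum_rpow_le_norm_rpow (p := ENNReal.ofReal p)
    (by rw [toReal_p hp]; linarith) (Xpw.pair x).1 s
  rw [toReal_p hp] at this
  exact this

theorem sum2_le (x : Xpw p w) (s : Finset ℕ) :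
    ∑ k ∈ s, (w k * seq x k) ^ 2 ≤ nrm2 x ^ 2 := by
  have := lp.sum_rpow_le_norm_rpow (p := 2) (by norm_num) (Xpw.pair x).2 s
  simp only [ENNReal.toReal_ofNat, Real.rpow_ofNat, Real.norm_eq_abs, sq_abs, pair_snd] at this
  exact this

theorem nrmP_le (hp : 2 < p) (x : Xpw p w) {C : ℝ} (hC : 0 ≤ C)
    (h : ∀ s : Finset ℕ, ∑ k ∈ s, |seq x k| ^ p ≤ C ^ p) : nrmP x ≤ C := by
  refine lp.norm_le_of_forall_sum_le (p := ENNReal.ofReal p)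
    (by rw [toReal_p hp]; linarith) hC ?_
  rw [toReal_p hp]
  exact h

theorem nrm2_le (x : Xpw p w) {C : ℝ} (hC : 0 ≤ C)
    (h : ∀ s : Finset ℕ, ∑ k ∈ s, (w k * seq x k) ^ 2 ≤ C ^ 2) : nrm2 x ≤ C := by
  refine lp.norm_le_of_forall_sum_le (p := 2) (by norm_num) hC ?_
  simp only [ENNReal.toReal_ofNat, Real.rpow_ofNat, Real.norm_eq_abs, sq_abs, pair_snd]
  exact h

theorem exists_of_bound (hp : 2 < p) (f : ℕ → ℝ) (A B : ℝ)
    (hA : ∀ s : Finset ℕ, ∑ k ∈ s, |f k| ^ p ≤ A)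
    (hB : ∀ s : Finset ℕ, ∑ k ∈ s, (w k * f k) ^ 2 ≤ B) : ∃ x : Xpw p w, seq x = f := by
  have h1 : Memℓp f (ENNReal.ofReal p) := by
    apply memℓp_gen' (C := A)
    rw [toReal_p hp]
    exact hA
  have h2 : Memℓp (fun k => w k * f k) 2 := by
    apply memℓp_gen' (C := B)
    simp only [ENNReal.toReal_ofNat, Real.rpow_ofNat, Real.norm_eq_abs, sq_abs]
    exact hB
  exact ⟨(show ↥(XpwMod p w) from ⟨(⟨f, h1⟩, ⟨_, h2⟩), fun n => rfl⟩), rfl⟩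

theorem seq_restrict (E : Set ℕ) (x : Xpw p w) : seq (restrict E x) = E.indicator (seq x) := rfl

theorem nrm2_restrict_finset (E : Finset ℕ) (x : Xpw p w) :
    nrm2 (restrict (E : Set ℕ) x) ^ 2 = ∑ k ∈ E, (w k * seq x k) ^ 2 := by
  apply le_antisymm
  · have hn : 0 ≤ ∑ k ∈ E, (w k * seq x k) ^ 2 := Finset.sum_nonneg fun _ _ => sq_nonneg _
    rw [← Real.sq_sqrt hn]
    apply pow_le_pow_left₀ (nrm2_nonneg _)
    apply nrm2_le _ (Real.sqrt_nonneg _)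
    intro s
    rw [Real.sq_sqrt hn]
    classical
    have : ∀ k, (w k * seq (restrict (E : Set ℕ) x) k) ^ 2
        = if k ∈ E then (w k * seq x k) ^ 2 else 0 := by
      intro k
      rw [seq_restrict, Set.indicator_apply]
      by_cases hk : k ∈ E <;> simp [hk]
    simp_rw [this]
    rw [← Finset.sum_filter]
    apply Finset.sum_le_sum_of_subset_of_nonneg
    · intro k hk
      exact (Finset.mem_filter.mp hk).2
    · intros; positivity
  · refine le_trans (le_of_eq ?_) (sum2_le _ E)
    apply Finset.sum_congr rfl
    intro k hk
    rw [seq_restrict, Set.indicator_of_mem (by exact_mod_cast hk)]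

theorem abs_seq_le (hp : 2 < p) (x : Xpw p w) (k : ℕ) : |seq x k| ≤ ‖x‖ := by
  have := sumP_le hp x {k}
  rw [Finset.sum_singleton] at this
  exact ((Real.rpow_le_rpow_iff (abs_nonneg _) (nrmP_nonneg _) (by linarith)).mp this).trans
    (nrmP_le_norm x)

theorem tail_tendsto (hp : 2 < p) (x : Xpw p w) :
    Filter.Tendsto (fun M : ℕ => ‖restrict {n : ℕ | M ≤ n} x‖) Filter.atTop (nhds 0) := by
  have h1 := (lp.hasSum_single (p := ENNReal.ofReal p) ENNReal.ofReal_ne_top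
    (Xpw.pair x).1).tendsto_sum_nat
  have h2 := (lp.hasSum_single (p := 2) (by norm_num) (Xpw.pair x).2).tendsto_sum_nat
  have h1' := (tendsto_iff_norm_sub_tendsto_zero.mp h1)
  have h2' := (tendsto_iff_norm_sub_tendsto_zero.mp h2)
  have := h1'.max h2'
  rw [max_self] at this
  refine this.congr fun M => ?_
  rw [norm_eq]
  have key : ∀ {q : ℝ≥0∞} [Fact (1 ≤ q)] (f : lp (fun _ : ℕ => ℝ) q) (g : lp (fun _ : ℕ => ℝ) q),
      (g : ℕ → ℝ) = {n : ℕ | M ≤ n}.indicator f →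
      ‖∑ i ∈ Finset.range M, lp.single q i (f i) - f‖ = ‖g‖ := by
    intro q _ f g hg
    rw [← norm_neg]
    congr 1
    apply lp.ext
    funext k
    rw [hg]
    simp only [lp.coeFn_neg, lp.coeFn_sub, Pi.neg_apply, Pi.sub_apply, lp.coeFn_sum,
      Finset.sum_apply, lp.single_apply, Pi.single_apply]
    by_cases hk : M ≤ k <;> simp [Set.indicator_apply, hk, Finset.sum_ite_eq, lt_of_not_ge]
  congr 1
  · exact key _ _ rfl
  · exact key _ _ rfl

theorem isComplete_XpwMod : IsClosed (XpwMod p w : Set (SeqP p × Seq2)) := by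
  have : (XpwMod p w : Set (SeqP p × Seq2)) =
      ⋂ n, {z | (z.2 : ℕ → ℝ) n = w n * (z.1 : ℕ → ℝ) n} := by
    ext z
    simp only [Set.mem_iInter]
    exact Iff.rfl
  rw [this]
  refine isClosed_iInter fun n => isClosed_eq ?_ ?_
  · have : Continuous fun z : Seq2 => (z : ℕ → ℝ) n := by
      have := (lp.uniformContinuous_coe (E := fun _ : ℕ => ℝ) (p := 2)).continuous
      exact (continuous_apply n).comp this
    exact this.comp continuous_snd
  · have : Continuous fun z : SeqP p => (z : ℕ → ℝ) n := by
      have := (lp.uniformContinuous_coe (E := fun _ : ℕ => ℝ) (p := ENNReal.ofReal p)).continuous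
      exact (continuous_apply n).comp this
    exact (this.comp continuous_fst).const_mul _

instance : CompleteSpace (Xpw p w) :=
  (isComplete_XpwMod (p := p) (w := w)).completeSpace_coe

theorem exists_clm (hp : 2 < p) {v : ℕ → ℝ} (L : (ℕ → ℝ) →ₗ[ℝ] (ℕ → ℝ)) {K : ℝ} (hK : 0 ≤ K)
    (h1 : ∀ (x : Xpw p v) (s : Finset ℕ), ∑ k ∈ s, |L (seq x) k| ^ p ≤ (K * nrmP x) ^ p)
    (h2 : ∀ (x : Xpw p v) (s : Finset ℕ),
      ∑ k ∈ s, (w k * L (seq x) k) ^ 2 ≤ (K * nrm2 x) ^ 2) :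
    ∃ T : Xpw p v →L[ℝ] Xpw p w, ‖T‖ ≤ K ∧ ∀ x, seq (T x) = L (seq x) := by
  choose F hF using fun x : Xpw p v =>
    exists_of_bound (w := w) hp (L (seq x)) _ _ (h1 x) (h2 x)
  let T0 : Xpw p v →ₗ[ℝ] Xpw p w :=
    { toFun := F
      map_add' := by
        intro x y
        apply seq_ext
        intro n
        rw [seq_add, hF, hF, hF]
        have : seq (x + y) = seq x + seq y := rfl
        rw [this, map_add]
        rfl
      map_smul' := by
        intro r x
        apply seq_ext
        intro n
        rw [RingHom.id_apply, seq_smul, hF, hF]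
        have : seq (r • x) = r • seq x := rfl
        rw [this, map_smul]
        rfl }
  have hb : ∀ x, ‖T0 x‖ ≤ K * ‖x‖ := by
    intro x
    rw [norm_eq]
    apply max_le
    · refine (nrmP_le hp (T0 x) (mul_nonneg hK (nrmP_nonneg x)) ?_).trans
        (mul_le_mul_of_nonneg_left (nrmP_le_norm x) hK)
      intro s
      have := h1 x s
      rwa [← hF] at this
    · refine (nrm2_le (T0 x) (mul_nonneg hK (nrm2_nonneg x)) ?_).trans
        (mul_le_mul_of_nonneg_left (nrm2_le_norm x) hK)
      intro s
      have := h2 x s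
      rwa [← hF] at this
  exact ⟨T0.mkContinuous K hb, T0.mkContinuous_norm_le hK hb, fun x => hF x⟩

end basics

theorem holder_block (hp : 2 < p) (hw : ∀ n, 0 < w n) (E : Finset ℕ) (y : ℕ → ℝ) :
    ∑ k ∈ E, (w k * y k) ^ 2 ≤
      (∑ k ∈ E, |y k| ^ p) ^ (2 / p) * (∑ k ∈ E, w k ^ (2 * p / (p - 2))) ^ ((p - 2) / p) := by
  have hp0 : 0 < p := by linarith
  have hp2 : 0 < p - 2 := by linarith
  have hc : (p / 2).HolderConjugate (p / (p - 2)) := by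
    rw [Real.holderConjugate_iff]
    refine ⟨by linarith, ?_⟩
    field_simp
    ring
  have := Real.inner_le_Lp_mul_Lq E (fun k => y k ^ 2) (fun k => w k ^ 2) hc
  have e1 : ∀ k, |y k ^ 2| ^ (p / 2) = |y k| ^ p := by
    intro k
    rw [abs_pow, ← Real.rpow_natCast, ← Real.rpow_mul (abs_nonneg _)]
    congr 1
    push_cast
    ring
  have e2 : ∀ k, |w k ^ 2| ^ (p / (p - 2)) = w k ^ (2 * p / (p - 2)) := by
    intro k
    rw [abs_pow, ← Real.rpow_natCast, ← Real.rpow_mul (abs_nonneg _), abs_of_pos (hw k)]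
    congr 1
    push_cast
    ring
  simp_rw [e1, e2] at this
  rw [one_div_div, one_div_div] at this
  refine le_trans (le_of_eq ?_) this
  apply Finset.sum_congr rfl
  intros
  ring

section block
variable [Fact (1 ≤ ENNReal.ofReal p)]

theorem exists_T (hp : 2 < p) {v : ℕ → ℝ} (b : ℕ → ℕ) (m : ℕ → ℝ) {K : ℝ} (hK : 0 ≤ K)
    (h1 : ∀ n (s : Finset ℕ), (∀ k ∈ s, b k = n) → ∑ k ∈ s, |m k| ^ p ≤ K ^ p)
    (h2 : ∀ n (s : Finset ℕ), (∀ k ∈ s, b k = n) →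
      ∑ k ∈ s, (w k * m k) ^ 2 ≤ K ^ 2 * v n ^ 2) :
    ∃ T : Xpw p v →L[ℝ] Xpw p w, ∀ a k, seq (T a) k = seq a (b k) * m k := by
  classical
  let L : (ℕ → ℝ) →ₗ[ℝ] (ℕ → ℝ) :=
    { toFun := fun a k => a (b k) * m k
      map_add' := by
        intro x y
        funext k
        simp only [Pi.add_apply]
        ring
      map_smul' := by
        intro r x
        funext k
        simp only [Pi.smul_apply, smul_eq_mul, RingHom.id_apply]
        ring }
  refine Exists.elim (exists_clm (w := w) (v := v) hp L hK ?_ ?_) ?_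
  rotate_left 2
  · rintro T ⟨-, hT⟩
    exact ⟨T, fun a k => by rw [hT]; rfl⟩
  · intro x s
    change ∑ k ∈ s, |seq x (b k) * m k| ^ p ≤ _
    rw [← Finset.sum_fiberwise_of_maps_to (t := s.image b) (g := b)
      (fun k hk => Finset.mem_image_of_mem b hk)]
    have hstep : ∀ n ∈ s.image b, ∑ k ∈ s with b k = n, |seq x (b k) * m k| ^ p
        ≤ |seq x n| ^ p * K ^ p := by
      intro n _
      have : ∑ k ∈ s with b k = n, |seq x (b k) * m k| ^ p
          = |seq x n| ^ p * ∑ k ∈ s with b k = n, |m k| ^ p := by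
        rw [Finset.mul_sum]
        apply Finset.sum_congr rfl
        intro k hk
        rw [(Finset.mem_filter.mp hk).2, abs_mul, Real.mul_rpow (abs_nonneg _) (abs_nonneg _)]
      rw [this]
      apply mul_le_mul_of_nonneg_left (h1 n _ fun k hk => (Finset.mem_filter.mp hk).2)
      positivity
    refine (Finset.sum_le_sum hstep).trans ?_
    rw [← Finset.sum_mul, Real.mul_rpow hK (nrmP_nonneg x), mul_comm]
    exact mul_le_mul_of_nonneg_left (sumP_le hp x _) (by positivity)
  · intro x s
    change ∑ k ∈ s, (w k * (seq x (b k) * m k)) ^ 2 ≤ _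
    rw [← Finset.sum_fiberwise_of_maps_to (t := s.image b) (g := b)
      (fun k hk => Finset.mem_image_of_mem b hk)]
    have hstep : ∀ n ∈ s.image b, ∑ k ∈ s with b k = n, (w k * (seq x (b k) * m k)) ^ 2
        ≤ (v n * seq x n) ^ 2 * K ^ 2 := by
      intro n _
      have : ∑ k ∈ s with b k = n, (w k * (seq x (b k) * m k)) ^ 2
          = (seq x n) ^ 2 * ∑ k ∈ s with b k = n, (w k * m k) ^ 2 := by
        rw [Finset.mul_sum]
        apply Finset.sum_congr rfl
        intro k hk
        rw [(Finset.mem_filter.mp hk).2]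
        ring
      rw [this]
      refine (mul_le_mul_of_nonneg_left (h2 n _ fun k hk => (Finset.mem_filter.mp hk).2)
        (sq_nonneg _)).trans (le_of_eq ?_)
      ring
    refine (Finset.sum_le_sum hstep).trans ?_
    rw [← Finset.sum_mul, mul_pow, mul_comm]
    exact mul_le_mul_of_nonneg_left (sum2_le x _) (by positivity)

theorem exists_S (hp : 2 < p) {v : ℕ → ℝ} (b : ℕ → ℕ) (g : ℕ → ℝ) (E : ℕ → Finset ℕ)
    (hE : ∀ n, ∀ k ∈ E n, b k = n) {K : ℝ} (hK : 0 ≤ K)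
    (h1 : ∀ n (y : ℕ → ℝ), |∑ k ∈ E n, y k * g k| ^ p ≤ K ^ p * ∑ k ∈ E n, |y k| ^ p)
    (h2 : ∀ n (y : ℕ → ℝ),
      (v n * ∑ k ∈ E n, y k * g k) ^ 2 ≤ K ^ 2 * ∑ k ∈ E n, (w k * y k) ^ 2) :
    ∃ S : Xpw p w →L[ℝ] Xpw p v, ‖S‖ ≤ K ∧ ∀ y n, seq (S y) n = ∑ k ∈ E n, seq y k * g k := by
  classical
  have hdis : ∀ s : Finset ℕ, (s : Set ℕ).PairwiseDisjoint E := by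
    intro s i _ j _ hij
    apply Finset.disjoint_left.mpr
    intro k hi hj
    exact hij ((hE i k hi).symm.trans (hE j k hj))
  let L : (ℕ → ℝ) →ₗ[ℝ] (ℕ → ℝ) :=
    { toFun := fun y n => ∑ k ∈ E n, y k * g k
      map_add' := by
        intro x y
        funext k
        simp only [Pi.add_apply, add_mul, Finset.sum_add_distrib]
      map_smul' := by
        intro r x
        funext k
        simp only [Pi.smul_apply, smul_eq_mul, RingHom.id_apply, Finset.mul_sum, mul_assoc] }
  refine Exists.elim (exists_clm (w := v) (v := w) hp L hK ?_ ?_) ?_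
  rotate_left 2
  · rintro T ⟨hn, hT⟩
    exact ⟨T, hn, fun a k => by rw [hT]; rfl⟩
  · intro x s
    refine (Finset.sum_le_sum fun n _ => h1 n (seq x)).trans ?_
    rw [← Finset.mul_sum, ← Finset.sum_biUnion (hdis s), Real.mul_rpow hK (nrmP_nonneg x)]
    exact mul_le_mul_of_nonneg_left (sumP_le hp x _) (by positivity)
  · intro x s
    refine (Finset.sum_le_sum fun n _ => h2 n (seq x)).trans ?_
    rw [← Finset.mul_sum, ← Finset.sum_biUnion (hdis s), mul_pow]
    exact mul_le_mul_of_nonneg_left (sum2_le x _) (by positivity)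

theorem exists_block (hp : 2 < p) (hw : ∀ n, 0 < w n) {v : ℕ → ℝ} (hv : ∀ n, 0 < v n)
    (b : ℕ → ℕ) (m : ℕ → ℝ) (E : ℕ → Finset ℕ)
    (hE : ∀ n, ∀ k ∈ E n, b k = n) {K : ℝ} (hK : 0 ≤ K)
    (h1 : ∀ n (s : Finset ℕ), (∀ k ∈ s, b k = n) → ∑ k ∈ s, |m k| ^ p ≤ K ^ p)
    (h2 : ∀ n (s : Finset ℕ), (∀ k ∈ s, b k = n) →
      ∑ k ∈ s, (w k * m k) ^ 2 ≤ K ^ 2 * v n ^ 2)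
    (h3 : ∀ n, v n ^ 2 ≤ K ^ 2 * ∑ k ∈ E n, (w k * m k) ^ 2)
    (h4 : ∀ n, (∑ k ∈ E n, w k ^ (2 * p / (p - 2))) ^ ((p - 2) / p) ≤
      K ^ 2 * ∑ k ∈ E n, (w k * m k) ^ 2) :
    ∃ (T : Xpw p v →L[ℝ] Xpw p w) (S : Xpw p w →L[ℝ] Xpw p v), ‖S‖ ≤ K ∧
      (∀ a, S (T a) = a) ∧ ∀ a k, seq (T a) k = seq a (b k) * m k := by
  have hp0 : 0 < p := by linarith
  obtain ⟨T, hT⟩ := exists_T (w := w) (v := v) hp b m hK h1 h2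
  set U : ℕ → ℝ := fun n => ∑ k ∈ E n, (w k * m k) ^ 2 with hU
  have hUpos : ∀ n, 0 < U n := by
    intro n
    have := h3 n
    have hvn : 0 < v n ^ 2 := pow_pos (hv n) 2
    by_contra hcon
    have hle : K ^ 2 * U n ≤ 0 := mul_nonpos_of_nonneg_of_nonpos (sq_nonneg K) (not_lt.mp hcon)
    linarith
  let g : ℕ → ℝ := fun k => w k ^ 2 * m k / U (b k)
  have hsum : ∀ n (y : ℕ → ℝ),
      ∑ k ∈ E n, y k * g k = (∑ k ∈ E n, (w k * y k) * (w k * m k)) / U n := by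
    intro n y
    rw [Finset.sum_div]
    apply Finset.sum_congr rfl
    intro k hk
    simp only [g, hE n k hk]
    ring
  have hCS : ∀ n (y : ℕ → ℝ),
      (∑ k ∈ E n, y k * g k) ^ 2 * U n ≤ ∑ k ∈ E n, (w k * y k) ^ 2 := by
    intro n y
    rw [hsum]
    have := Finset.sum_mul_sq_le_sq_mul_sq (E n) (fun k => w k * y k) (fun k => w k * m k)
    rw [div_pow, div_mul_eq_mul_div, div_le_iff₀ (pow_pos (hUpos n) 2), pow_two (U n), ← mul_assoc]
    exact mul_le_mul_of_nonneg_right this (hUpos n).le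
  refine Exists.elim (exists_S (w := w) (v := v) hp b g E hE hK ?_ ?_) ?_
  rotate_left 2
  · rintro S ⟨hSn, hS⟩
    refine ⟨T, S, hSn, ?_, hT⟩
    intro a
    apply seq_ext
    intro n
    rw [hS, hsum, div_eq_iff (hUpos n).ne', hU, Finset.mul_sum]
    apply Finset.sum_congr rfl
    intro k hk
    rw [hT, hE n k hk]
    ring
  · intro n y
    have hA : 0 ≤ ∑ k ∈ E n, |y k| ^ p := Finset.sum_nonneg fun _ _ => by positivity
    have hh := (hCS n y).trans (holder_block hp hw (E n) y)
    have h5 : (∑ k ∈ E n, y k * g k) ^ 2 * U n ≤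
        ((∑ k ∈ E n, |y k| ^ p) ^ (2 / p) * K ^ 2) * U n := by
      refine hh.trans ?_
      rw [mul_assoc]
      exact mul_le_mul_of_nonneg_left (h4 n) (by positivity)
    have h6 := le_of_mul_le_mul_right h5 (hUpos n)
    have h7 := Real.rpow_le_rpow (sq_nonneg _) h6 (by positivity : 0 ≤ p / 2)
    rw [Real.mul_rpow (by positivity) (by positivity), ← Real.rpow_mul hA,
      ← sq_abs (∑ k ∈ E n, y k * g k), ← Real.rpow_natCast, ← Real.rpow_natCast,
      ← Real.rpow_mul (abs_nonneg _), ← Real.rpow_mul hK] at h7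
    have e1 : ((2 : ℕ) : ℝ) * (p / 2) = p := by push_cast; ring
    have e2 : 2 / p * (p / 2) = 1 := by field_simp
    rw [e1, e2, Real.rpow_one, mul_comm] at h7
    exact h7
  · intro n y
    rw [mul_pow]
    calc v n ^ 2 * (∑ k ∈ E n, y k * g k) ^ 2
        ≤ (K ^ 2 * U n) * (∑ k ∈ E n, y k * g k) ^ 2 :=
          mul_le_mul_of_nonneg_right (h3 n) (sq_nonneg _)
      _ = K ^ 2 * ((∑ k ∈ E n, y k * g k) ^ 2 * U n) := by ring
      _ ≤ _ := mul_le_mul_of_nonneg_left (hCS n y) (sq_nonneg _)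

end block

section embed
variable [Fact (1 ≤ ENNReal.ofReal p)]

theorem exists_count (r : ℕ → ℝ) (η : ℝ) (hη : 0 < η) (h0 : ∀ j, η ≤ r j) (h1 : ∀ j, r j ≤ 1) :
    ∃ M : ℕ, 1 ≤ ∑ j ∈ Finset.range M, r j ∧ ∑ j ∈ Finset.range M, r j ≤ 2 := by
  classical
  have hex : ∃ M : ℕ, 1 ≤ ∑ j ∈ Finset.range M, r j := by
    obtain ⟨M, hM⟩ := exists_nat_gt (1 / η)
    refine ⟨M, ?_⟩
    have h2 : ∑ j ∈ Finset.range M, η ≤ ∑ j ∈ Finset.range M, r j :=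
      Finset.sum_le_sum fun j _ => h0 j
    rw [Finset.sum_const, Finset.card_range, nsmul_eq_mul] at h2
    rw [div_lt_iff₀ hη] at hM
    linarith
  refine ⟨Nat.find hex, Nat.find_spec hex, ?_⟩
  rcases hM : Nat.find hex with _ | M
  · simp
  · have : ¬ 1 ≤ ∑ j ∈ Finset.range M, r j := Nat.find_min hex (by omega)
    rw [Finset.sum_range_succ]
    linarith [h1 M, not_le.mp this]

theorem exists_A (hp : 2 < p) (hw : ∀ n, 0 < w n) {v : ℕ → ℝ} (hv : ∀ n, 0 < v n)
    (hup : ∀ k, v k ≤ w (Nat.unpair k).1) (η : ℕ → ℝ) (hη : ∀ n, 0 < η n)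
    (hlow : ∀ k, η (Nat.unpair k).1 ≤ v k) :
    ∃ (A : Xpw p w →L[ℝ] Xpw p v) (B : Xpw p v →L[ℝ] Xpw p w), ∀ a, B (A a) = a := by
  classical
  have hp0 : 0 < p := by linarith
  have hp2 : 0 < p - 2 := by linarith
  set q := 2 * p / (p - 2) with hq
  have hq0 : 0 < q := by positivity
  set b : ℕ → ℕ := fun k => (Nat.unpair k).1 with hb
  have hbp : ∀ n j, b (Nat.pair n j) = n := by intro n j; simp [hb]
  set r : ℕ → ℝ := fun k => (v k / w (b k)) ^ q with hr
  have hr0 : ∀ k, 0 ≤ r k := fun k => Real.rpow_nonneg (div_nonneg (hv k).le (hw _).le) _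
  have hM : ∀ n, ∃ M : ℕ, 1 ≤ ∑ j ∈ Finset.range M, r (Nat.pair n j) ∧
      ∑ j ∈ Finset.range M, r (Nat.pair n j) ≤ 2 := by
    intro n
    apply exists_count _ ((η n / w n) ^ q) (Real.rpow_pos_of_pos (div_pos (hη n) (hw n)) _)
    · intro j
      have := hlow (Nat.pair n j)
      rw [Nat.unpair_pair] at this
      simp only [hr, hbp]
      exact Real.rpow_le_rpow (div_pos (hη n) (hw n)).le
        (div_le_div_of_nonneg_right this (hw n).le) hq0.le
    · intro j
      have := hup (Nat.pair n j)
      rw [Nat.unpair_pair] at this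
      simp only [hr, hbp]
      exact Real.rpow_le_one (div_pos (hv _) (hw n)).le ((div_le_one (hw n)).mpr this) hq0.le
  choose M hM1 hM2 using hM
  let G : ℕ → Finset ℕ := fun n => (Finset.range (M n)).image (Nat.pair n)
  have hG : ∀ n, ∀ k ∈ G n, b k = n := by
    intro n k hk
    obtain ⟨j, -, rfl⟩ := Finset.mem_image.mp hk
    exact hbp n j
  have hGs : ∀ n, ∑ k ∈ G n, r k = ∑ j ∈ Finset.range (M n), r (Nat.pair n j) := by
    intro n
    apply Finset.sum_image
    intro i _ j _ hij
    exact (Nat.pair_eq_pair.mp hij).2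
  let m : ℕ → ℝ := fun k => if k ∈ G (b k) then (v k / w (b k)) ^ (2 / (p - 2)) else 0
  have hmp : ∀ k, |m k| ^ p = if k ∈ G (b k) then r k else 0 := by
    intro k
    simp only [m]
    have h0 : 0 ≤ v k / w (b k) := (div_pos (hv _) (hw _)).le
    split_ifs
    · rw [abs_of_nonneg (Real.rpow_nonneg h0 _), ← Real.rpow_mul h0, hr]
      congr 1
      rw [hq]
      ring
    · rw [abs_zero, Real.zero_rpow hp0.ne']
  have hm2 : ∀ k, (v k * m k) ^ 2 = if k ∈ G (b k) then w (b k) ^ 2 * r k else 0 := by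
    intro k
    simp only [m]
    have h0 : 0 < v k / w (b k) := div_pos (hv _) (hw _)
    split_ifs
    · have e : r k = (v k / w (b k)) ^ 2 * ((v k / w (b k)) ^ (2 / (p - 2))) ^ 2 := by
        rw [← Real.rpow_natCast, ← Real.rpow_natCast, ← Real.rpow_mul h0.le, ← Real.rpow_add h0]
        simp only [hr]
        congr 1
        rw [hq]
        push_cast
        field_simp
        ring
      rw [e, mul_pow, div_pow]
      have := (hw (b k)).ne'
      field_simp
    · simp
  have hsub : ∀ n (s : Finset ℕ), (∀ k ∈ s, b k = n) →
      ∑ k ∈ s, (if k ∈ G (b k) then r k else 0) ≤ 2 := by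
    intro n s hs
    rw [← Finset.sum_filter]
    refine le_trans ?_ ((hGs n).le.trans (hM2 n))
    apply Finset.sum_le_sum_of_subset_of_nonneg
    · intro k hk
      have := Finset.mem_filter.mp hk
      rw [hs k this.1] at this
      exact this.2
    · intros; exact hr0 _
  have hsum2 : ∀ n, ∑ k ∈ G n, (v k * m k) ^ 2 = w n ^ 2 * ∑ k ∈ G n, r k := by
    intro n
    rw [Finset.mul_sum]
    apply Finset.sum_congr rfl
    intro k hk
    rw [hm2, hG n k hk, if_pos hk]
  obtain ⟨T, S, -, hST, -⟩ := exists_block (p := p) (w := v) hp hv (v := w) hw b m G hG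
    (K := 2) (by norm_num)
    (by
      intro n s hs
      simp_rw [hmp]
      refine (hsub n s hs).trans ?_
      calc (2 : ℝ) = 2 ^ (1 : ℝ) := by norm_num
        _ ≤ 2 ^ p := Real.rpow_le_rpow_of_exponent_le (by norm_num) (by linarith))
    (by
      intro n s hs
      have : ∑ k ∈ s, (v k * m k) ^ 2 = w n ^ 2 * ∑ k ∈ s, (if k ∈ G (b k) then r k else 0) := by
        rw [Finset.mul_sum]
        apply Finset.sum_congr rfl
        intro k hk
        rw [hm2, hs k hk]
        split_ifs <;> simp
      rw [this]
      nlinarith [hsub n s hs, sq_nonneg (w n)])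
    (by
      intro n
      rw [hsum2, hGs]
      nlinarith [hM1 n, sq_nonneg (w n)])
    (by
      intro n
      rw [hsum2]
      have hR := hM1 n
      rw [← hGs] at hR
      have : ∑ k ∈ G n, v k ^ q = w n ^ q * ∑ k ∈ G n, r k := by
        rw [Finset.mul_sum]
        apply Finset.sum_congr rfl
        intro k hk
        simp only [hr]
        rw [hG n k hk, Real.div_rpow (hv k).le (hw n).le]
        have := (Real.rpow_pos_of_pos (hw n) q).ne'
        field_simp
      rw [this, Real.mul_rpow (Real.rpow_nonneg (hw n).le _) (by linarith),
        ← Real.rpow_mul (hw n).le]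
      have e : q * ((p - 2) / p) = ((2 : ℕ) : ℝ) := by
        rw [hq]
        push_cast
        field_simp
      rw [e, Real.rpow_natCast]
      have h5 : (∑ k ∈ G n, r k) ^ ((p - 2) / p) ≤ ∑ k ∈ G n, r k := by
        conv_rhs => rw [← Real.rpow_one (∑ k ∈ G n, r k)]
        apply Real.rpow_le_rpow_of_exponent_le hR
        rw [div_le_one hp0]
        linarith
      have h6 := mul_le_mul_of_nonneg_left h5 (sq_nonneg (w n))
      have h7 : 0 ≤ w n ^ 2 * ∑ k ∈ G n, r k := mul_nonneg (sq_nonneg _) (by linarith)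
      linarith)
  exact ⟨T, S, hST⟩

theorem exists_e (hp : 2 < p) (n : ℕ) : ∃ e : Xpw p w, seq e = Pi.single n 1 := by
  classical
  apply exists_of_bound hp _ 1 (w n ^ 2)
  · intro s
    have : ∀ k, |(Pi.single n 1 : ℕ → ℝ) k| ^ p = if k = n then 1 else 0 := by
      intro k
      by_cases hk : k = n
      · subst hk; simp
      · simp [hk, Real.zero_rpow (by linarith : p ≠ 0)]
    simp_rw [this]
    rw [Finset.sum_ite_eq']
    split_ifs <;> norm_num
  · intro s
    have : ∀ k, (w k * (Pi.single n 1 : ℕ → ℝ) k) ^ 2 = if k = n then w n ^ 2 else 0 := by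
      intro k
      by_cases hk : k = n
      · subst hk; simp
      · simp [hk]
    simp_rw [this]
    rw [Finset.sum_ite_eq']
    split_ifs
    · exact le_rfl
    · positivity

theorem exists_coord (hp : 2 < p) (n : ℕ) :
    ∃ φ : Xpw p w →L[ℝ] ℝ, ‖φ‖ ≤ 1 ∧ ∀ x, φ x = seq x n := by
  let φ : Xpw p w →ₗ[ℝ] ℝ :=
    { toFun := fun x => seq x n
      map_add' := fun x y => rfl
      map_smul' := fun r x => rfl }
  have hb : ∀ x, ‖φ x‖ ≤ 1 * ‖x‖ := by
    intro x
    rw [one_mul]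
    exact abs_seq_le hp x n
  exact ⟨φ.mkContinuous 1 hb, φ.mkContinuous_norm_le zero_le_one hb, fun x => rfl⟩

theorem mem_of_basis (hp : 2 < p) {v : ℕ → ℝ} (T : Xpw p v →L[ℝ] Xpw p w)
    (X : Submodule ℝ (Xpw p w)) (hX : IsClosed (X : Set (Xpw p w)))
    (h : ∀ n (e : Xpw p v), seq e = Pi.single n 1 → T e ∈ X) (a : Xpw p v) : T a ∈ X := by
  have h1 : ∀ M : ℕ, T (restrict {n : ℕ | n < M} a) ∈ X := by
    intro M
    induction M with
    | zero =>
      have : restrict {n : ℕ | n < 0} a = 0 := by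
        apply seq_ext
        intro n
        rw [seq_restrict, Set.indicator_of_notMem (by simp)]
        rfl
      rw [this, map_zero]
      exact X.zero_mem
    | succ M ih =>
      obtain ⟨e, he⟩ := exists_e (p := p) (w := v) hp M
      have : restrict {n : ℕ | n < M + 1} a = restrict {n : ℕ | n < M} a + seq a M • e := by
        apply seq_ext
        intro n
        rw [seq_add, seq_smul, seq_restrict, seq_restrict, he]
        simp only [Set.indicator_apply]
        change (if n < M + 1 then _ else _) = (if n < M then _ else _) + _
        rcases lt_trichotomy n M with hn | hn | hn
        · rw [if_pos (by omega), if_pos hn, Pi.single_eq_of_ne (by omega)]; ring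
        · subst hn; simp
        · rw [if_neg (by omega), if_neg (by omega), Pi.single_eq_of_ne (by omega)]; ring
      rw [this, map_add, map_smul]
      exact X.add_mem ih (X.smul_mem _ (h M e he))
  have h2 : Filter.Tendsto (fun M : ℕ => restrict {n : ℕ | n < M} a) Filter.atTop (nhds a) := by
    rw [tendsto_iff_norm_sub_tendsto_zero]
    refine (tail_tendsto hp a).congr fun M => ?_
    rw [← norm_neg]
    congr 1
    apply seq_ext
    intro n
    have : seq (-restrict {n : ℕ | M ≤ n} a) n = - seq (restrict {n : ℕ | M ≤ n} a) n := rfl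
    rw [this, seq_sub, seq_restrict, seq_restrict]
    simp only [Set.indicator_apply]
    change -(if M ≤ n then _ else _) = (if n < M then _ else _) - _
    by_cases hn : M ≤ n
    · rw [if_pos hn, if_neg (by omega)]; ring
    · rw [if_neg hn, if_pos (by omega)]; ring
  exact hX.mem_of_tendsto ((T.continuous.tendsto a).comp h2) (Filter.Eventually.of_forall h1)

theorem exists_perturb (hp : 2 < p) {v : ℕ → ℝ} (T : Xpw p v →L[ℝ] Xpw p w)
    (S : Xpw p w →L[ℝ] Xpw p v) (hST : ∀ a, S (T a) = a) {K θ : ℝ} (hK : 0 ≤ K) (hS : ‖S‖ ≤ K)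
    (hθ : K * (θ * 2) < 1)
    (r : ℕ → Xpw p w) (hr : ∀ n, ‖r n‖ ≤ θ * (1 / 2) ^ n) :
    ∃ (T' : Xpw p v →L[ℝ] Xpw p w) (S' : Xpw p w →L[ℝ] Xpw p v), (∀ a, S' (T' a) = a) ∧
      ∀ n (e : Xpw p v), seq e = Pi.single n 1 → T' e = T e + r n := by
  choose φ hφ1 hφ using fun n => exists_coord (p := p) (w := v) hp n
  have hb : ∀ n, ‖(φ n).smulRight (r n)‖ ≤ θ * (1 / 2) ^ n := by
    intro n
    rw [ContinuousLinearMap.norm_smulRight_apply]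
    calc ‖φ n‖ * ‖r n‖ ≤ 1 * ‖r n‖ := mul_le_mul_of_nonneg_right (hφ1 n) (norm_nonneg _)
      _ ≤ _ := by rw [one_mul]; exact hr n
  have hgeo : HasSum (fun n : ℕ => θ * (1 / 2 : ℝ) ^ n) (θ * 2) := hasSum_geometric_two.mul_left θ
  have hsum : Summable fun n => (φ n).smulRight (r n) :=
    Summable.of_norm_bounded hgeo.summable hb
  obtain ⟨R, hR⟩ := hsum
  have hRn : ‖R‖ ≤ θ * 2 := by
    rw [← hR.tsum_eq]
    exact tsum_of_norm_bounded hgeo hb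
  have hRe : ∀ n (e : Xpw p v), seq e = Pi.single n 1 → R e = r n := by
    intro n e he
    have h1 := hR.mapL (ContinuousLinearMap.apply ℝ (Xpw p w) e)
    have h2 : HasSum (fun k => (ContinuousLinearMap.apply ℝ (Xpw p w) e)
        ((φ k).smulRight (r k))) (r n) := by
      have := hasSum_single (f := fun k => (ContinuousLinearMap.apply ℝ (Xpw p w) e)
        ((φ k).smulRight (r k))) n (by
          intro k hk
          simp [hφ, he, hk])
      simpa [hφ, he] using this
    exact h1.unique h2
  have hlt : ‖-(S.comp R)‖ < 1 := by
    rw [norm_neg]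
    calc ‖S.comp R‖ ≤ ‖S‖ * ‖R‖ := S.opNorm_comp_le R
      _ ≤ K * (θ * 2) := mul_le_mul hS hRn (norm_nonneg _) hK
      _ < 1 := hθ
  obtain ⟨u, hu⟩ := isUnit_one_sub_of_norm_lt_one hlt
  refine ⟨T + R, (↑u⁻¹ : Xpw p v →L[ℝ] Xpw p v).comp S, ?_, ?_⟩
  · intro a
    have h1 : S ((T + R) a) = (u : Xpw p v →L[ℝ] Xpw p v) a := by
      rw [hu]
      simp [hST]
    have h2 : ((↑u⁻¹ : Xpw p v →L[ℝ] Xpw p v) * ↑u) a = a := by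
      rw [Units.inv_mul]
      rfl
    rw [ContinuousLinearMap.comp_apply, h1]
    exact h2
  · intro n e he
    rw [ContinuousLinearMap.add_apply, hRe n e he]

theorem exists_Y {v : ℕ → ℝ} (T : Xpw p w →L[ℝ] Xpw p v)
    (S : Xpw p v →L[ℝ] Xpw p w) (hST : ∀ a, S (T a) = a) (X : Submodule ℝ (Xpw p v))
    (hX : ∀ a, T a ∈ X) :
    ∃ Y : Submodule ℝ (Xpw p v), Y ≤ X ∧ Nonempty (↥Y ≃L[ℝ] Xpw p w) ∧ Y.ClosedComplemented := by
  let Y : Submodule ℝ (Xpw p v) := LinearMap.range T.toLinearMap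
  have hmem : ∀ a, T a ∈ Y := fun a => ⟨a, rfl⟩
  have hTS : ∀ y ∈ Y, T (S y) = y := by
    rintro y ⟨a, rfl⟩
    change T (S (T a)) = T a
    rw [hST]
  refine ⟨Y, ?_, ⟨?_⟩, ?_⟩
  · rintro y ⟨a, rfl⟩
    exact hX a
  · refine ContinuousLinearEquiv.equivOfInverse (S.comp Y.subtypeL) (T.codRestrict Y hmem) ?_ ?_
    · intro y
      apply Subtype.ext
      exact hTS y.1 y.2
    · intro a
      exact hST a
  · refine ⟨(T.comp S).codRestrict Y (fun y => hmem _), ?_⟩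
    intro y
    apply Subtype.ext
    exact hTS y.1 y.2

end embed

theorem main_aux (p : ℝ) (hp : 2 < p) [Fact (1 ≤ ENNReal.ofReal p)]
    (w : ℕ → ℝ) (hw : ∀ n, 0 < w n)
    (X : Submodule ℝ (Xpw p w)) (hX : IsClosed (X : Set (Xpw p w)))
    (c δ : ℝ) (hc : 0 < c) (hδ : 0 < δ)
    (h : ∀ ε : ℝ, 0 < ε → ∃ ε' : ℝ, 0 < ε' ∧
      ∀ N : ℕ, ∃ x : Xpw p w, x ∈ X ∧ ‖x‖ = 1 ∧
        ∃ E : Finset ℕ, (∀ n ∈ E, N + 1 ≤ n) ∧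
          ‖restrict {n : ℕ | n < N + 1} x‖ < ((N + 1 : ℕ) : ℝ)⁻¹ ∧
          δ * nrm2 x ≤ nrm2 (restrict (E : Set ℕ) x) ∧
          c * nrm2 (restrict (E : Set ℕ) x) ≤ ε ∧
          (∑ k ∈ E, w k ^ (2 * p / (p - 2))) ^ ((p - 2) / (2 * p)) ≤
            c * nrm2 (restrict (E : Set ℕ) x) ∧
          ε' ≤ (∑ k ∈ E, w k ^ (2 * p / (p - 2))) ^ ((p - 2) / (2 * p))) :
    ∃ Y : Submodule ℝ (Xpw p w), Y ≤ X ∧ Nonempty (↥Y ≃L[ℝ] Xpw p w) ∧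
      Y.ClosedComplemented := by
  classical
  have hp0 : 0 < p := by linarith
  have hp2 : 0 < p - 2 := by linarith
  obtain ⟨K, hK1, hKc, hKδ⟩ : ∃ K : ℝ, 1 ≤ K ∧ c ≤ K ∧ 1 / δ ≤ K :=
    ⟨max 1 (max c (1 / δ)), le_max_left _ _, (le_max_left _ _).trans (le_max_right _ _),
      (le_max_right _ _).trans (le_max_right _ _)⟩
  have hK0 : 0 < K := by linarith
  set θ : ℝ := 1 / (4 * K) with hθ
  have hθ0 : 0 < θ := by positivity
  choose ε' hε' hN using fun m => h (c * w m) (mul_pos hc (hw m))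
  choose x hxX hx1 E hEN ha hb hc1 hc2 hc3 using hN
  have hpos : ∀ k : ℕ, 0 < θ / 2 * (1 / 2) ^ k := fun k => by positivity
  have hinv : ∀ k : ℕ, ∀ᶠ M : ℕ in Filter.atTop,
      ((M + 1 : ℕ) : ℝ)⁻¹ ≤ θ / 2 * (1 / 2) ^ k := by
    intro k
    have h1 : Filter.Tendsto (fun M : ℕ => ((M + 1 : ℕ) : ℝ)⁻¹) Filter.atTop (nhds 0) :=
      tendsto_inv_atTop_zero.comp
        (tendsto_natCast_atTop_atTop.comp (Filter.tendsto_add_atTop_nat 1))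
    exact h1.eventually_le_const (hpos k)
  have hnext : ∀ k N : ℕ, ∃ N' : ℕ, N < N' ∧ (∀ j ∈ E (Nat.unpair k).1 N, j < N' + 1) ∧
      ‖restrict {n : ℕ | N' + 1 ≤ n} (x (Nat.unpair k).1 N)‖ ≤ θ / 2 * (1 / 2) ^ k ∧
      ((N' + 1 : ℕ) : ℝ)⁻¹ ≤ θ / 2 * (1 / 2) ^ (k + 1) := by
    intro k N
    have h1 := ((tail_tendsto hp (x (Nat.unpair k).1 N)).comp
      (Filter.tendsto_add_atTop_nat 1)).eventually_le_const (hpos k)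
    have h2 : ∀ᶠ M : ℕ in Filter.atTop, ∀ j ∈ E (Nat.unpair k).1 N, j < M + 1 := by
      filter_upwards [Filter.eventually_ge_atTop ((E (Nat.unpair k).1 N).sup id)] with M hM j hj
      have : j ≤ (E (Nat.unpair k).1 N).sup id := Finset.le_sup (f := id) hj
      omega
    obtain ⟨M, hM1, hM2, hM3, hM4⟩ :=
      ((Filter.eventually_gt_atTop N).and (h2.and (h1.and (hinv (k + 1))))).exists
    exact ⟨M, hM1, hM2, hM3, hM4⟩
  choose nxt hn1 hn2 hn3 hn4 using hnext
  obtain ⟨N0, hN0⟩ := (hinv 0).exists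
  let N : ℕ → ℕ := fun k => Nat.rec N0 (fun k N => nxt k N) k
  have hNs : ∀ k, N (k + 1) = nxt k (N k) := fun k => rfl
  have hNinv : ∀ k, ((N k + 1 : ℕ) : ℝ)⁻¹ ≤ θ / 2 * (1 / 2) ^ k := by
    intro k
    cases k with
    | zero => exact hN0
    | succ k => rw [hNs]; exact hn4 k (N k)
  have hNmono : StrictMono N := strictMono_nat_of_lt_succ fun k => by
    rw [hNs]; exact hn1 k (N k)
  let y : ℕ → Xpw p w := fun k => x (Nat.unpair k).1 (N k)
  let F : ℕ → Finset ℕ := fun k => E (Nat.unpair k).1 (N k)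
  let In : ℕ → ℕ → Prop := fun k j => N k + 1 ≤ j ∧ j < N (k + 1) + 1
  have hInu : ∀ k k' j, In k j → In k' j → k = k' := by
    rintro k k' j ⟨h1, h2⟩ ⟨h3, h4⟩
    have h5 : N k < N (k' + 1) := by omega
    have h6 : N k' < N (k + 1) := by omega
    have h7 : k < k' + 1 := (hNmono.lt_iff_lt (a := k) (b := k' + 1)).mp h5
    have h8 : k' < k + 1 := (hNmono.lt_iff_lt (a := k') (b := k + 1)).mp h6
    omega
  let b : ℕ → ℕ := fun j => if hj : ∃ k, In k j then hj.choose else 0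
  have hbIn : ∀ k j, In k j → b j = k := by
    intro k j hkj
    have hj : ∃ k, In k j := ⟨k, hkj⟩
    simp only [b, dif_pos hj]
    exact hInu _ _ j hj.choose_spec hkj
  have hFIn : ∀ k, ∀ j ∈ F k, In k j := fun k j hj =>
    ⟨hEN _ _ j hj, by rw [hNs]; exact hn2 k (N k) j hj⟩
  let m : ℕ → ℝ := fun j => if In (b j) j then seq (y (b j)) j else 0
  have hmIn : ∀ k j, In k j → m j = seq (y k) j := by
    intro k j hkj
    simp only [m, hbIn k j hkj, if_pos hkj]
  have hmabs : ∀ k j, b j = k → |m j| ≤ |seq (y k) j| := by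
    intro k j hj
    simp only [m, hj]
    split_ifs
    · exact le_rfl
    · rw [abs_zero]; exact abs_nonneg _
  let v : ℕ → ℝ := fun k => nrm2 (restrict (F k : Set ℕ) (y k))
  have hvlow : ∀ k, ε' (Nat.unpair k).1 / c ≤ v k := by
    intro k
    rw [div_le_iff₀ hc, mul_comm]
    exact (hc3 _ _).trans (hc2 _ _)
  have hvup : ∀ k, v k ≤ w (Nat.unpair k).1 := fun k => le_of_mul_le_mul_left (hc1 _ _) hc
  have hv : ∀ k, 0 < v k := fun k => (div_pos (hε' _) hc).trans_le (hvlow k)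
  have hU : ∀ k, ∑ j ∈ F k, (w j * m j) ^ 2 = v k ^ 2 := by
    intro k
    rw [nrm2_restrict_finset]
    apply Finset.sum_congr rfl
    intro j hj
    rw [hmIn k j (hFIn k j hj)]
  obtain ⟨T, S, hSn, hST, hT⟩ := exists_block (p := p) (w := w) hp hw (v := v) hv b m F
    (fun k j hj => hbIn k j (hFIn k j hj)) (K := K) hK0.le
    (by
      intro k s hs
      calc ∑ j ∈ s, |m j| ^ p ≤ ∑ j ∈ s, |seq (y k) j| ^ p :=
            Finset.sum_le_sum fun j hj =>
              Real.rpow_le_rpow (abs_nonneg _) (hmabs k j (hs j hj)) hp0.le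
        _ ≤ nrmP (y k) ^ p := sumP_le hp _ _
        _ ≤ K ^ p := Real.rpow_le_rpow (nrmP_nonneg _)
            (((nrmP_le_norm _).trans (hx1 _ _).le).trans hK1) hp0.le)
    (by
      intro k s hs
      have h5 : nrm2 (y k) ≤ K * v k := by
        have h6 : δ * nrm2 (y k) ≤ v k := hb _ _
        calc nrm2 (y k) ≤ 1 / δ * v k := by
              rw [one_div, ← div_eq_inv_mul, le_div_iff₀ hδ, mul_comm]
              exact h6
          _ ≤ K * v k := mul_le_mul_of_nonneg_right hKδ (hv k).le
      calc ∑ j ∈ s, (w j * m j) ^ 2 ≤ ∑ j ∈ s, (w j * seq (y k) j) ^ 2 := by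
            apply Finset.sum_le_sum
            intro j hj
            rw [mul_pow, mul_pow]
            exact mul_le_mul_of_nonneg_left (sq_le_sq.mpr (hmabs k j (hs j hj))) (sq_nonneg _)
        _ ≤ nrm2 (y k) ^ 2 := sum2_le _ _
        _ ≤ (K * v k) ^ 2 := pow_le_pow_left₀ (nrm2_nonneg _) h5 2
        _ = _ := mul_pow _ _ _)
    (by
      intro k
      rw [hU]
      have : 1 ≤ K ^ 2 := one_le_pow₀ hK1
      nlinarith [sq_nonneg (v k)])
    (by
      intro k
      rw [hU, ← mul_pow]
      have hω : 0 ≤ ∑ j ∈ F k, w j ^ (2 * p / (p - 2)) :=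
        Finset.sum_nonneg fun j _ => Real.rpow_nonneg (hw j).le _
      have h5 : (∑ j ∈ F k, w j ^ (2 * p / (p - 2))) ^ ((p - 2) / (2 * p)) ≤ K * v k :=
        (hc2 _ _).trans (mul_le_mul_of_nonneg_right hKc (hv k).le)
      have h6 := pow_le_pow_left₀ (Real.rpow_nonneg hω _) h5 2
      rw [← Real.rpow_natCast, ← Real.rpow_mul hω] at h6
      have e : (p - 2) / (2 * p) * ((2 : ℕ) : ℝ) = (p - 2) / p := by
        push_cast
        field_simp
      rwa [e] at h6)
  let r : ℕ → Xpw p w := fun k =>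
    restrict {n : ℕ | n < N k + 1} (y k) + restrict {n : ℕ | N (k + 1) + 1 ≤ n} (y k)
  have hr : ∀ k, ‖r k‖ ≤ θ * (1 / 2) ^ k := by
    intro k
    have h1 : ‖restrict {n : ℕ | n < N k + 1} (y k)‖ ≤ θ / 2 * (1 / 2) ^ k :=
      (ha _ _).le.trans (hNinv k)
    have h2 : ‖restrict {n : ℕ | N (k + 1) + 1 ≤ n} (y k)‖ ≤ θ / 2 * (1 / 2) ^ k := hn3 k (N k)
    refine (norm_add_le _ _).trans ((add_le_add h1 h2).trans (le_of_eq ?_))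
    ring
  have hTr : ∀ k (e : Xpw p v), seq e = Pi.single k 1 → T e + r k = y k := by
    intro k e he
    apply seq_ext
    intro j
    simp only [r]
    rw [seq_add, seq_add, hT, he, seq_restrict, seq_restrict]
    simp only [Set.indicator_apply]
    change _ + ((if j < N k + 1 then _ else _) + (if N (k + 1) + 1 ≤ j then _ else _)) = _
    by_cases hj : In k j
    · rw [hmIn k j hj, hbIn k j hj, Pi.single_eq_same, if_neg (not_lt.mpr hj.1),
        if_neg (not_le.mpr hj.2)]
      ring
    · have h0 : (Pi.single k 1 : ℕ → ℝ) (b j) * m j = 0 := by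
        by_cases hbj : b j = k
        · simp only [m, hbj, if_neg hj, mul_zero]
        · rw [Pi.single_eq_of_ne hbj, zero_mul]
      rw [h0]
      have hlt : N k < N (k + 1) := hNmono (Nat.lt_succ_self k)
      by_cases h1 : j < N k + 1
      · rw [if_pos h1, if_neg (by omega)]
        ring
      · have h2 : N (k + 1) + 1 ≤ j := by
          by_contra h2
          exact hj ⟨by omega, by omega⟩
        rw [if_neg h1, if_pos h2]
        ring
  obtain ⟨T', S', hST', hT'⟩ := exists_perturb hp T S hST hK0.le hSn
    (by rw [hθ]; field_simp; norm_num) r hr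
  obtain ⟨A, B, hBA⟩ := exists_A (p := p) (w := w) hp hw hv hvup (fun n => ε' n / c)
    (fun n => div_pos (hε' n) hc) hvlow
  have hmem : ∀ a, T' a ∈ X := by
    apply mem_of_basis hp T' X hX
    intro k e he
    rw [hT' k e he, hTr k e he]
    exact hxX _ _
  refine exists_Y (T'.comp A) (B.comp S') ?_ X (fun a => hmem _)
  intro a
  simp [hST', hBA]

end XpwAux

/-- Theorem 1.3, 2 ⟹ 1: if `X` is a complemented subspace of `X_p` and
there are constants `c, δ > 0` such that for every `ε > 0` there is `0 < ε' < ε` such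
that for every `N` there are a norm-one `x ∈ X` and a finite set `E ⊆ {N, N+1, …}` with
(a) `‖x_{|[1,N]}‖ < N⁻¹`, (b) `|x_{|E}|_2 ≥ δ |x|_2`,
(c) `ε ≥ c |x_{|E}|_2 ≥ ω(E)^{(p-2)/(2p)} ≥ ε'`, then `X` contains a subspace isomorphic
to `X_p` which is complemented in `X_p`. -/
theorem stmt6 (p : ℝ) (hp : 2 < p) [Fact (1 ≤ ENNReal.ofReal p)]
    (w : ℕ → ℝ) (hw : IsXpWeight p w)
    (X : Submodule ℝ (Xpw p w)) (hX : X.ClosedComplemented)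
    (c δ : ℝ) (hc : 0 < c) (hδ : 0 < δ)
    (h : ∀ ε : ℝ, 0 < ε → ∃ ε' : ℝ, 0 < ε' ∧ ε' < ε ∧
      ∀ N : ℕ, 1 ≤ N → ∃ x : Xpw p w, x ∈ X ∧ ‖x‖ = 1 ∧
        ∃ E : Set ℕ, E.Finite ∧ E ⊆ {n : ℕ | N ≤ n} ∧
          ‖restrict {n : ℕ | n < N} x‖ < (N : ℝ)⁻¹ ∧
          nrm2 (restrict E x) ≥ δ * nrm2 x ∧
          ε ≥ c * nrm2 (restrict E x) ∧
          c * nrm2 (restrict E x) ≥ omegaE p w E ^ ((p - 2) / (2 * p)) ∧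
          omegaE p w E ^ ((p - 2) / (2 * p)) ≥ ε') :
    ∃ Y : Submodule ℝ (Xpw p w), Y ≤ X ∧ Nonempty (↥Y ≃L[ℝ] Xpw p w) ∧
      Y.ClosedComplemented := by
  refine XpwAux.main_aux p hp w hw.1 X hX.isClosed c δ hc hδ ?_
  intro ε hε
  obtain ⟨ε', h0, -, hN⟩ := h ε hε
  refine ⟨ε', h0, fun N => ?_⟩
  obtain ⟨x, hxX, hx1, E, hEf, hEN, h1, h2, h3, h4, h5⟩ := hN (N + 1) (Nat.le_add_left 1 N)
  lift E to Finset ℕ using hEf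
  have hom : omegaE p w (E : Set ℕ) = ∑ k ∈ E, w k ^ (2 * p / (p - 2)) :=
    Finset.tsum_subtype E fun k => w k ^ (2 * p / (p - 2))
  rw [hom] at h4 h5
  exact ⟨x, hxX, hx1, E, fun n hn => hEN hn, h1, h2, h3, h4, h5⟩
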